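/- For each ordered pair (α,β) in {(123,231), (123,312), (321,132), (321,213)} of patterns of length three, and for every n ≥ 3, the number of permutations of {1,…,n} that avoid α and contain β exactly once is s_n(α;β) = 2n−5. -/

import Mathlib

/-- Number of occurrences of the pattern `α ∈ S_k` in the permutation `π ∈ S_n`:
the number of strictly increasing choices of `k` indices such that the corresponding
subword of `π` is order-isomorphic to `α`. -/
noncomputable def occCount {k n : ℕ} (α : Equiv.Perm (Fin k)) (π : Equiv.Perm (Fin n)) : ℕ :=
  Nat.card {f : Fin k → Fin n // StrictMono f ∧ ∀ a b : Fin k, α a < α b ↔ π (f a) < π (f b)}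

/-- `π` avoids the pattern `α`. -/
def avoids {k n : ℕ} (α : Equiv.Perm (Fin k)) (π : Equiv.Perm (Fin n)) : Prop :=
  occCount α π = 0

/-- `π` contains the pattern `α` exactly once. -/
def containsOnce {k n : ℕ} (α : Equiv.Perm (Fin k)) (π : Equiv.Perm (Fin n)) : Prop :=
  occCount α π = 1

/-- The pattern `123` (as a permutation of `Fin 3`, 0-indexed). -/
def p123 : Equiv.Perm (Fin 3) := ⟨![0,1,2], ![0,1,2], by decide, by decide⟩
/-- The pattern `132`. -/
def p132 : Equiv.Perm (Fin 3) := ⟨![0,2,1], ![0,2,1], by decide, by decide⟩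
/-- The pattern `213`. -/
def p213 : Equiv.Perm (Fin 3) := ⟨![1,0,2], ![1,0,2], by decide, by decide⟩
/-- The pattern `231`. -/
def p231 : Equiv.Perm (Fin 3) := ⟨![1,2,0], ![2,0,1], by decide, by decide⟩
/-- The pattern `312`. -/
def p312 : Equiv.Perm (Fin 3) := ⟨![2,0,1], ![1,2,0], by decide, by decide⟩
/-- The pattern `321`. -/
def p321 : Equiv.Perm (Fin 3) := ⟨![2,1,0], ![2,1,0], by decide, by decide⟩

/-- `s_n(α;β)`: the number of permutations of `{1,…,n}` that avoid `α` and contain `β`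
exactly once. -/
noncomputable def sAvoidContain (α β : Equiv.Perm (Fin 3)) (n : ℕ) : ℕ :=
  Nat.card {π : Equiv.Perm (Fin n) // avoids α π ∧ containsOnce β π}

/-- `s_n(∅;{α,β})`: the number of permutations of `{1,…,n}` that contain each of `α` and `β`
exactly once. -/
noncomputable def sContainBoth (α β : Equiv.Perm (Fin 3)) (n : ℕ) : ℕ :=
  Nat.card {π : Equiv.Perm (Fin n) // containsOnce α π ∧ containsOnce β π}

/-!
Reversal and inversion of permutations carry the four pairs of patterns into each other, which
leaves `(321, 213)`. Neither `321` nor `213` starts with its minimum, so passing from `σ` to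
`1 ⊕ σ` changes no occurrence count, and `s_{n+1} - s_n` is the number of admissible permutations
that do not start with their minimum. In such a permutation the unique `213` starts at the first
position and has the minimum as its middle letter. Comparing the other entries with this occurrence
forces the word `2 4 5 ⋯ n 1 3` or its inverse. These two coincide exactly for `n = 3`, so the
number sought is `1 + 2 (n - 3) = 2 n - 5`.
-/

open Equiv

lemma perm_eq_of_forall_lt_imp_lt {γ : Type*} [LinearOrder γ] [WellFoundedLT γ] {π σ : Perm γ}
    (h : ∀ i j, σ i < σ j → π i < π j) : π = σ := by
  have hmono : StrictMono (π * σ⁻¹) := fun a b hab ↦ h _ _ (by simpa using hab)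
  have hid : ⇑(π * σ⁻¹) = id :=
    (hmono.range_inj strictMono_id).1 (by rw [(π * σ⁻¹).surjective.range_eq, Set.range_id])
  exact mul_inv_eq_one.1 (Equiv.ext (congrFun hid))

lemma strictMono_fin_three {γ : Type*} [Preorder γ] {f : Fin 3 → γ} :
    StrictMono f ↔ f 0 < f 1 ∧ f 1 < f 2 := by
  simp [Fin.strictMono_iff_lt_succ, Fin.forall_fin_two]

section Occurrences

variable {k n : ℕ} {α : Perm (Fin k)} {π : Perm (Fin n)} {f : Fin k → Fin n}

/-- The subword of `π` at the positions `f` is an occurrence of the pattern `α`. -/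
def IsOccurrence (α : Perm (Fin k)) (π : Perm (Fin n)) (f : Fin k → Fin n) : Prop :=
  StrictMono f ∧ ∀ a b : Fin k, α a < α b ↔ π (f a) < π (f b)

lemma occCount_eq_ncard (α : Perm (Fin k)) (π : Perm (Fin n)) :
    occCount α π = {f | IsOccurrence α π f}.ncard :=
  Nat.card_coe_set_eq _

lemma avoids_iff : avoids α π ↔ ∀ f, ¬ IsOccurrence α π f := by
  rw [avoids, occCount_eq_ncard, Set.ncard_eq_zero, Set.eq_empty_iff_forall_notMem]
  rfl

lemma containsOnce_iff : containsOnce α π ↔ ∃! f, IsOccurrence α π f := by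
  rw [containsOnce, occCount_eq_ncard, Set.ncard_eq_one, Set.singleton_iff_unique_mem]
  rfl

lemma occCount_eq_zero_of_lt (hn : n < k) (α : Perm (Fin k)) (π : Perm (Fin n)) :
    occCount α π = 0 :=
  avoids_iff.2 fun _ hf ↦ hn.not_ge (by simpa using Fintype.card_le_of_injective _ hf.1.injective)

lemma isOccurrence_iff_strictMono :
    IsOccurrence α π f ↔ StrictMono f ∧ StrictMono fun c ↦ π (f (α⁻¹ c)) := by
  refine and_congr_right fun _ ↦ ⟨fun h a b hab ↦ (h _ _).1 (by simpa using hab), fun h a b ↦ ?_⟩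
  simpa using (h.lt_iff_lt (a := α a) (b := α b)).symm

lemma isOccurrence_inv :
    IsOccurrence α⁻¹ π⁻¹ (fun c ↦ π (f (α⁻¹ c))) ↔ IsOccurrence α π f := by
  simp [isOccurrence_iff_strictMono, and_comm]

lemma isOccurrence_reverse :
    IsOccurrence (α * Fin.revPerm) (π * Fin.revPerm) (Fin.rev ∘ f ∘ Fin.rev) ↔
      IsOccurrence α π f := by
  have hf : StrictMono (Fin.rev ∘ f ∘ Fin.rev) ↔ StrictMono f := by
    refine ⟨fun h a b hab ↦ ?_,
      fun h ↦ Fin.rev_strictAnti.comp (h.comp_strictAnti Fin.rev_strictAnti)⟩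
    simpa using h (Fin.rev_lt_rev.2 hab)
  rw [isOccurrence_iff_strictMono, isOccurrence_iff_strictMono, hf]
  simp [Perm.inv_def]

lemma occCount_inv (α : Perm (Fin k)) (π : Perm (Fin n)) :
    occCount α⁻¹ π⁻¹ = occCount α π :=
  (Nat.card_congr <| (Equiv.arrowCongr α π).subtypeEquiv fun _ ↦ isOccurrence_inv.symm).symm

lemma occCount_reverse (α : Perm (Fin k)) (π : Perm (Fin n)) :
    occCount (α * Fin.revPerm) (π * Fin.revPerm) = occCount α π :=
  (Nat.card_congr <| (Equiv.arrowCongr Fin.revPerm Fin.revPerm).subtypeEquiv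
    fun _ ↦ isOccurrence_reverse.symm).symm

end Occurrences

section Counting

variable {n : ℕ} (α β : Perm (Fin 3))

lemma sAvoidContain_eq_ncard (n : ℕ) :
    sAvoidContain α β n = {π : Perm (Fin n) | avoids α π ∧ containsOnce β π}.ncard :=
  Nat.card_coe_set_eq _

lemma sAvoidContain_eq_zero_of_lt (hn : n < 3) : sAvoidContain α β n = 0 := by
  simp [sAvoidContain, containsOnce, occCount_eq_zero_of_lt hn]

lemma sAvoidContain_inv (n : ℕ) : sAvoidContain α⁻¹ β⁻¹ n = sAvoidContain α β n :=
  (Nat.card_congr <| (Equiv.inv (Perm (Fin n))).subtypeEquiv fun _ ↦ by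
    simp [avoids, containsOnce, occCount_inv]).symm

lemma sAvoidContain_reverse (n : ℕ) :
    sAvoidContain (α * Fin.revPerm) (β * Fin.revPerm) n = sAvoidContain α β n :=
  (Nat.card_congr <| (Equiv.mulRight Fin.revPerm).subtypeEquiv fun _ ↦ by
    simp [avoids, containsOnce, occCount_reverse]).symm

end Counting

section OneDirectSum

variable {k n : ℕ}

/-- The direct sum `1 ⊕ σ`: the word of `σ` with its values raised by one, preceded by its new
minimum. -/
def oneDirectSum (σ : Perm (Fin n)) : Perm (Fin (n + 1)) :=
  Perm.decomposeFin.symm (0, σ)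

@[simp]
lemma oneDirectSum_zero (σ : Perm (Fin n)) : oneDirectSum σ 0 = 0 :=
  Perm.decomposeFin_symm_apply_zero 0 σ

@[simp]
lemma oneDirectSum_succ (σ : Perm (Fin n)) (i : Fin n) :
    oneDirectSum σ i.succ = (σ i).succ := by
  simp [oneDirectSum]

lemma oneDirectSum_injective : Function.Injective (oneDirectSum (n := n)) := fun σ τ h ↦ by
  simpa [oneDirectSum] using h

lemma exists_oneDirectSum_eq {π : Perm (Fin (n + 1))} (h : π 0 = 0) :
    ∃ σ, oneDirectSum σ = π := by
  obtain ⟨⟨p, σ⟩, rfl⟩ := Perm.decomposeFin.symm.surjective π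
  rw [Perm.decomposeFin_symm_apply_zero] at h
  exact ⟨σ, by rw [oneDirectSum, h]⟩

lemma isOccurrence_oneDirectSum_succ {α : Perm (Fin k)} {σ : Perm (Fin n)} {g : Fin k → Fin n} :
    IsOccurrence α (oneDirectSum σ) (Fin.succ ∘ g) ↔ IsOccurrence α σ g := by
  simp [IsOccurrence, StrictMono]

lemma IsOccurrence.exists_succ_comp {α : Perm (Fin (k + 1))} (hα : α 0 ≠ 0) {σ : Perm (Fin n)}
    {f : Fin (k + 1) → Fin (n + 1)} (hf : IsOccurrence α (oneDirectSum σ) f) :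
    ∃ g, Fin.succ ∘ g = f := by
  have hlt : oneDirectSum σ (f (α⁻¹ 0)) < oneDirectSum σ (f 0) :=
    (hf.2 _ _).1 (by simpa using Fin.pos_of_ne_zero hα)
  have hf0 : f 0 ≠ 0 := fun h ↦ by simp [h] at hlt
  have hfa (a) : f a ≠ 0 :=
    ((Fin.pos_of_ne_zero hf0).trans_le (hf.1.monotone (Fin.zero_le a))).ne'
  exact ⟨fun a ↦ (f a).pred (hfa a), by ext; simp⟩

lemma occCount_oneDirectSum {α : Perm (Fin (k + 1))} (hα : α 0 ≠ 0) (σ : Perm (Fin n)) :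
    occCount α (oneDirectSum σ) = occCount α σ := by
  have himage : {f | IsOccurrence α (oneDirectSum σ) f} =
      (Fin.succ ∘ ·) '' {g | IsOccurrence α σ g} := by
    ext f
    constructor
    · intro hf
      obtain ⟨g, rfl⟩ := IsOccurrence.exists_succ_comp hα hf
      exact ⟨g, isOccurrence_oneDirectSum_succ.1 hf, rfl⟩
    · rintro ⟨g, hg, rfl⟩
      exact isOccurrence_oneDirectSum_succ.2 hg
  rw [occCount_eq_ncard, occCount_eq_ncard, himage,
    Set.ncard_image_of_injective _ (Fin.succ_injective n).comp_left]

lemma sAvoidContain_succ {α β : Perm (Fin 3)} (hα : α 0 ≠ 0) (hβ : β 0 ≠ 0) (n : ℕ) :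
    sAvoidContain α β (n + 1) = sAvoidContain α β n +
      {π : Perm (Fin (n + 1)) | π 0 ≠ 0 ∧ avoids α π ∧ containsOnce β π}.ncard := by
  have himage : {π : Perm (Fin (n + 1)) | avoids α π ∧ containsOnce β π} ∩ {π | π 0 = 0} =
      oneDirectSum '' {σ | avoids α σ ∧ containsOnce β σ} := by
    ext π
    constructor
    · rintro ⟨hπ, h0⟩
      obtain ⟨σ, rfl⟩ := exists_oneDirectSum_eq h0
      exact ⟨σ, by simpa [avoids, containsOnce, occCount_oneDirectSum, hα, hβ] using hπ, rfl⟩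
    · rintro ⟨σ, hσ, rfl⟩
      exact ⟨by simpa [avoids, containsOnce, occCount_oneDirectSum, hα, hβ] using hσ,
        oneDirectSum_zero σ⟩
  rw [sAvoidContain_eq_ncard, sAvoidContain_eq_ncard,
    ← Set.ncard_inter_add_ncard_sdiff_eq_ncard _ {π : Perm (Fin (n + 1)) | π 0 = 0}, himage,
    Set.ncard_image_of_injective _ oneDirectSum_injective]
  congr 2
  ext π
  exact and_comm

end OneDirectSum

section LengthThree

variable {n : ℕ} {π : Perm (Fin n)}

lemma isOccurrence_p213_iff {f : Fin 3 → Fin n} :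
    IsOccurrence p213 π f ↔ f 0 < f 1 ∧ f 1 < f 2 ∧ π (f 1) < π (f 0) ∧ π (f 0) < π (f 2) := by
  simp only [isOccurrence_iff_strictMono, strictMono_fin_three, and_assoc]
  rfl

lemma isOccurrence_p213_vecCons_iff {i j l : Fin n} :
    IsOccurrence p213 π ![i, j, l] ↔ i < j ∧ j < l ∧ π j < π i ∧ π i < π l :=
  isOccurrence_p213_iff

lemma isOccurrence_p321_iff {f : Fin 3 → Fin n} :
    IsOccurrence p321 π f ↔ f 0 < f 1 ∧ f 1 < f 2 ∧ π (f 2) < π (f 1) ∧ π (f 1) < π (f 0) := by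
  simp only [isOccurrence_iff_strictMono, strictMono_fin_three, and_assoc]
  rfl

lemma avoids_p321_iff :
    avoids p321 π ↔ ∀ i j l, i < j → j < l → π j < π i → ¬ π l < π j := by
  rw [avoids_iff]
  refine ⟨fun h i j l hij hjl hji hlj ↦
    h ![i, j, l] (isOccurrence_p321_iff.2 ⟨hij, hjl, hlj, hji⟩), fun h f hf ↦ ?_⟩
  obtain ⟨h01, h12, h21, h10⟩ := isOccurrence_p321_iff.1 hf
  exact h _ _ _ h01 h12 h10 h21

lemma containsOnce.p213_unique (h : containsOnce p213 π) {i j l i' j' l' : Fin n}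
    (hocc : IsOccurrence p213 π ![i, j, l])
    (hij : i' < j') (hjl : j' < l') (hji : π j' < π i') (hil : π i' < π l') :
    i' = i ∧ j' = j ∧ l' = l := by
  have heq :=
    (containsOnce_iff.1 h).unique (isOccurrence_p213_vecCons_iff.2 ⟨hij, hjl, hji, hil⟩) hocc
  exact ⟨congrFun heq 0, congrFun heq 1, congrFun heq 2⟩

lemma avoids_p321_inv : avoids p321 π⁻¹ ↔ avoids p321 π := by
  have hp : p321⁻¹ = p321 := by decide
  rw [avoids, avoids, ← occCount_inv p321 π, hp]

lemma containsOnce_p213_inv : containsOnce p213 π⁻¹ ↔ containsOnce p213 π := by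
  have hp : p213⁻¹ = p213 := by decide
  rw [containsOnce, containsOnce, ← occCount_inv p213 π, hp]

end LengthThree

section Classification

variable {n : ℕ} {π : Perm (Fin (n + 1))} {p k : Fin (n + 1)}

lemma apply_lt_apply_of_apply_eq_zero (hp : π p = 0) {i : Fin (n + 1)} (hi : i ≠ p) :
    π p < π i := by
  rw [hp, Fin.pos_iff_ne_zero, ← hp]
  exact π.injective.ne hi

lemma avoids.strictMonoOn_Iio (h321 : avoids p321 π) (hp : π p = 0) :
    StrictMonoOn π (Set.Iio p) := by
  intro i _ j hj hij
  by_contra hlt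
  have hji : π j < π i := (not_lt.1 hlt).lt_of_ne (π.injective.ne hij.ne')
  exact avoids_p321_iff.1 h321 i j p hij hj hji (apply_lt_apply_of_apply_eq_zero hp (ne_of_lt hj))

-- If there is no such `k`, every entry after the value `0` is below `π 0`, and the given `213`
-- yields a `321` starting at position `0`.
lemma exists_isOccurrence_p213_of_apply_zero_ne (h321 : avoids p321 π) (h213 : containsOnce p213 π)
    (hp : π p = 0) (h0 : π 0 ≠ 0) : ∃ k, IsOccurrence p213 π ![0, p, k] := by
  have hp0 : 0 < p := Fin.pos_of_ne_zero fun h ↦ h0 (h ▸ hp)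
  suffices ∃ k, p < k ∧ π 0 < π k by
    obtain ⟨k, hpk, hk⟩ := this
    have hp0' : π p < π 0 := apply_lt_apply_of_apply_eq_zero hp hp0.ne
    exact ⟨k, isOccurrence_p213_vecCons_iff.2 ⟨hp0, hpk, hp0', hk⟩⟩
  by_contra! hle
  obtain ⟨f, hf⟩ := (containsOnce_iff.1 h213).exists
  obtain ⟨h01, h12, h10, h02⟩ := isOccurrence_p213_iff.1 hf
  have hpf1 : p ≤ f 1 := by
    by_contra! hlt
    exact h10.not_gt (h321.strictMonoOn_Iio hp (h01.trans hlt) hlt h01)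
  have hf0 : π (f 0) < π 0 := h02.trans_le (hle _ (hpf1.trans_lt h12))
  have hf0_ne : f 0 ≠ 0 := fun h ↦ by simp [h] at hf0
  exact avoids_p321_iff.1 h321 0 (f 0) (f 1) (Fin.pos_of_ne_zero hf0_ne) h01 hf0 h10

lemma IsOccurrence.inv_p213 (hp : π p = 0) (hocc : IsOccurrence p213 π ![0, p, k]) :
    IsOccurrence p213 π⁻¹ ![0, π 0, π k] := by
  obtain ⟨h0p, hpk, hp0, h0k⟩ := isOccurrence_p213_vecCons_iff.1 hocc
  have hp' : π⁻¹ 0 = p := by simp [← hp]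
  refine isOccurrence_p213_vecCons_iff.2 ⟨?_, h0k, ?_, ?_⟩
  · simpa [hp] using hp0
  · simpa [hp'] using h0p
  · simpa [hp'] using hpk

lemma apply_third_lt_apply_of_between (h213 : containsOnce p213 π)
    (hocc : IsOccurrence p213 π ![0, p, k]) (hp : π p = 0) {i : Fin (n + 1)}
    (hi : 0 < i) (hip : i < p) : π k < π i := by
  obtain ⟨-, hpk, -, -⟩ := isOccurrence_p213_vecCons_iff.1 hocc
  by_contra! hle
  have hik : π i < π k := hle.lt_of_ne (π.injective.ne (hip.trans hpk).ne)
  exact hi.ne' (h213.p213_unique hocc hip hpk (apply_lt_apply_of_apply_eq_zero hp hip.ne) hik).1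

lemma apply_lt_apply_zero_of_lt (h213 : containsOnce p213 π)
    (hocc : IsOccurrence p213 π ![0, p, k]) {i : Fin (n + 1)}
    (hpi : p < i) (hik : i ≠ k) : π i < π 0 := by
  obtain ⟨h0p, -, hp0, -⟩ := isOccurrence_p213_vecCons_iff.1 hocc
  by_contra! hle
  have h0i : π 0 < π i := hle.lt_of_ne (π.injective.ne (h0p.trans hpi).ne)
  exact hik (h213.p213_unique hocc h0p hpi hp0 h0i).2.2

lemma val_third_eq_val_second_add_one (h213 : containsOnce p213 π)
    (hocc : IsOccurrence p213 π ![0, p, k]) :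
    (k : ℕ) = p + 1 := by
  obtain ⟨h0p, hpk, -, h0k⟩ := isOccurrence_p213_vecCons_iff.1 hocc
  by_contra hne
  let i : Fin (n + 1) := ⟨p + 1, by omega⟩
  have hpi : p < i := Fin.lt_def.2 (Nat.lt_succ_self _)
  have hik : i < k := by simp only [i, Fin.lt_def] at hpk ⊢; omega
  have hi0 : π i < π 0 := apply_lt_apply_zero_of_lt h213 hocc hpi hik.ne
  exact hpi.ne' (h213.p213_unique hocc (h0p.trans hpi) hik hi0 h0k).2.1

-- If neither holds, the positions `1`, `k` and the last one carry a `321`.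
lemma third_eq_last_or_val_second_eq_one (h321 : avoids p321 π)
    (h213 : containsOnce p213 π) (hp : π p = 0) (hocc : IsOccurrence p213 π ![0, p, k]) :
    k = Fin.last n ∨ (p : ℕ) = 1 := by
  obtain ⟨h0p, hpk, -, h0k⟩ := isOccurrence_p213_vecCons_iff.1 hocc
  simp only [Fin.lt_def, Fin.val_zero] at h0p hpk
  by_contra! ⟨hk, hp1⟩
  let i : Fin (n + 1) := ⟨1, by omega⟩
  have hip : i < p := by simp only [i, Fin.lt_def]; omega
  have hkl : k < Fin.last n := Fin.lt_last_iff_ne_last.2 hk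
  have hki : π k < π i :=
    apply_third_lt_apply_of_between h213 hocc hp (Fin.lt_def.2 Nat.one_pos) hip
  have hlk : π (Fin.last n) < π k :=
    (apply_lt_apply_zero_of_lt h213 hocc (hpk.trans hkl) hkl.ne').trans h0k
  exact avoids_p321_iff.1 h321 i k (Fin.last n) (hip.trans hpk) hkl hki hlk

lemma apply_third_eq_last_of_val_second_eq_one (h213 : containsOnce p213 π)
    (hocc : IsOccurrence p213 π ![0, p, k]) (hp1 : (p : ℕ) = 1) : π k = Fin.last n := by
  obtain ⟨h0p, -, hp0, h0k⟩ := isOccurrence_p213_vecCons_iff.1 hocc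
  obtain ⟨i, hi⟩ := π.surjective (Fin.last n)
  suffices i = k from this ▸ hi
  by_contra hik
  have h0i : π 0 < π i := hi ▸ h0k.trans_le (Fin.le_last _)
  have hpi : p < i := by
    have hi0 : i ≠ 0 := fun h ↦ by simp [h] at h0i
    have hip : i ≠ p := fun h ↦ (h ▸ h0i).not_gt hp0
    omega
  exact h0i.not_gt (apply_lt_apply_zero_of_lt h213 hocc hpi hik)

end Classification

section ExceptionalPerm

variable {m : ℕ}

/-- The permutation with word `2 4 5 ⋯ n 1 3`, where `n = m + 3`. Together with its inverse it is
what remains of the permutations counted by `sAvoidContain p321 p213 n` once those of the form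
`1 ⊕ σ` are removed. -/
def exceptionalPerm (m : ℕ) : Perm (Fin (m + 3)) :=
  swap 1 2 * Equiv.addRight 2

lemma val_exceptionalPerm (i : Fin (m + 3)) :
    (exceptionalPerm m i : ℕ) =
      if (i : ℕ) = 0 then 1 else if (i : ℕ) = m + 1 then 0
      else if (i : ℕ) = m + 2 then 2 else (i : ℕ) + 2 := by
  have h1 : ((1 : Fin (m + 3)) : ℕ) = 1 := rfl
  have h2 : ((2 : Fin (m + 3)) : ℕ) = 2 := rfl
  have hadd : ((i + 2 : Fin (m + 3)) : ℕ) =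
      if (i : ℕ) ≤ m then (i : ℕ) + 2 else (i : ℕ) - (m + 1) := by
    rw [Fin.val_add_eq_ite, h2]
    split_ifs <;> omega
  simp only [exceptionalPerm, Perm.mul_apply, coe_addRight, swap_apply_def, Fin.ext_iff,
    apply_ite Fin.val, hadd, h1, h2]
  split_ifs at * <;> omega

lemma exceptionalPerm_zero_ne_zero : exceptionalPerm m 0 ≠ 0 := by
  simp [Fin.ext_iff, val_exceptionalPerm]

lemma le_and_lt_of_exceptionalPerm_lt {i j : Fin (m + 3)} (hij : i < j)
    (h : exceptionalPerm m j < exceptionalPerm m i) : (i : ℕ) ≤ m ∧ m < j := by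
  simp only [Fin.lt_def, val_exceptionalPerm] at h hij
  grind

lemma avoids_p321_exceptionalPerm : avoids p321 (exceptionalPerm m) :=
  avoids_p321_iff.2 fun _ _ _ hij hjl hji hlj ↦
    (le_and_lt_of_exceptionalPerm_lt hjl hlj).1.not_gt (le_and_lt_of_exceptionalPerm_lt hij hji).2

lemma isOccurrence_p213_exceptionalPerm_iff {f : Fin 3 → Fin (m + 3)} :
    IsOccurrence p213 (exceptionalPerm m) f ↔
      (f 0 : ℕ) = 0 ∧ (f 1 : ℕ) = m + 1 ∧ (f 2 : ℕ) = m + 2 := by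
  rw [isOccurrence_p213_iff]
  constructor
  · rintro ⟨h01, h12, h10, h02⟩
    have h := le_and_lt_of_exceptionalPerm_lt h01 h10
    simp only [Fin.lt_def, val_exceptionalPerm] at *
    grind
  · simp only [Fin.lt_def, val_exceptionalPerm]
    grind

lemma containsOnce_p213_exceptionalPerm : containsOnce p213 (exceptionalPerm m) := by
  refine containsOnce_iff.2 ⟨![0, ⟨m + 1, by omega⟩, Fin.last _], ?_, fun f hf ↦ ?_⟩
  · simp [isOccurrence_p213_exceptionalPerm_iff]
  · have := isOccurrence_p213_exceptionalPerm_iff.1 hf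
    ext a
    fin_cases a <;> simp [this]

lemma exceptionalPerm_eq_inv_iff : exceptionalPerm m = (exceptionalPerm m)⁻¹ ↔ m = 0 := by
  constructor
  · intro h
    have h1 : exceptionalPerm m (exceptionalPerm m 0) = 0 := by
      nth_rw 1 [h]; simp
    by_contra hm
    simp only [Fin.ext_iff, val_exceptionalPerm] at h1
    grind
  · rintro rfl
    decide

-- Here `0 = π p < π 0 < π (p + 1) < π 1 < ⋯ < π (p - 1)`, where `p + 1` is the last position.
lemma eq_exceptionalPerm {π : Perm (Fin (m + 3))} {p : Fin (m + 3)} (h321 : avoids p321 π)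
    (h213 : containsOnce p213 π) (hp : π p = 0)
    (hocc : IsOccurrence p213 π ![0, p, Fin.last (m + 2)]) : π = exceptionalPerm m := by
  have hpmin (i) (hi : i ≠ p) : π p < π i := apply_lt_apply_of_apply_eq_zero hp hi
  have hincr (i j) (hij : i < j) (hj : j < p) : π i < π j :=
    h321.strictMonoOn_Iio hp (hij.trans hj) hj hij
  have hbetween (i) (hi : 0 < i) (hip : i < p) : π (Fin.last (m + 2)) < π i :=
    apply_third_lt_apply_of_between h213 hocc hp hi hip
  have hpm : (p : ℕ) = m + 1 :=
    (Nat.succ_injective (val_third_eq_val_second_add_one h213 hocc)).symm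
  have hσp : exceptionalPerm m p = 0 := by simp [Fin.ext_iff, val_exceptionalPerm, hpm]
  obtain ⟨-, -, -, h0k⟩ := isOccurrence_p213_vecCons_iff.1 hocc
  refine perm_eq_of_forall_lt_imp_lt fun i j hij ↦ ?_
  rcases eq_or_ne i p with rfl | hip
  · exact hpmin j fun hji ↦ hij.ne (congrArg _ hji.symm)
  have hjp : j ≠ p := fun hjp ↦ Fin.not_lt_zero _ (hσp ▸ hjp ▸ hij)
  rcases eq_or_ne i 0 with rfl | hi0
  · rcases eq_or_ne j (Fin.last (m + 2)) with rfl | hjl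
    · exact h0k
    · have hj0 : j ≠ 0 := fun hj0 ↦ hij.ne (congrArg _ hj0.symm)
      exact h0k.trans (hbetween j (Fin.pos_of_ne_zero hj0) (by grind))
  simp only [Fin.lt_def, val_exceptionalPerm] at hij
  rcases eq_or_ne i (Fin.last (m + 2)) with rfl | hil
  · exact hbetween j (by grind) (by grind)
  · exact hincr i j (by grind) (by grind)

lemma eq_exceptionalPerm_or_eq_inv {π : Perm (Fin (m + 3))} (h321 : avoids p321 π)
    (h213 : containsOnce p213 π) (h0 : π 0 ≠ 0) :
    π = exceptionalPerm m ∨ π = (exceptionalPerm m)⁻¹ := by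
  have hp : π (π⁻¹ 0) = 0 := by simp
  obtain ⟨k, hocc⟩ := exists_isOccurrence_p213_of_apply_zero_ne h321 h213 hp h0
  rcases third_eq_last_or_val_second_eq_one h321 h213 hp hocc with rfl | hp1
  · exact .inl (eq_exceptionalPerm h321 h213 hp hocc)
  · refine .inr (inv_eq_iff_eq_inv.1 (eq_exceptionalPerm (p := π 0)
      (avoids_p321_inv.2 h321) (containsOnce_p213_inv.2 h213) (by simp) ?_))
    rw [← apply_third_eq_last_of_val_second_eq_one h213 hocc hp1]
    exact hocc.inv_p213 hp

end ExceptionalPerm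

lemma setOf_apply_zero_ne_zero_eq (m : ℕ) :
    {π : Perm (Fin (m + 3)) | π 0 ≠ 0 ∧ avoids p321 π ∧ containsOnce p213 π} =
      {exceptionalPerm m, (exceptionalPerm m)⁻¹} := by
  ext π
  constructor
  · rintro ⟨h0, h321, h213⟩
    exact eq_exceptionalPerm_or_eq_inv h321 h213 h0
  · rintro (rfl | rfl)
    · exact ⟨exceptionalPerm_zero_ne_zero, avoids_p321_exceptionalPerm,
        containsOnce_p213_exceptionalPerm⟩
    · exact ⟨Perm.inv_eq_iff_eq.not.2 exceptionalPerm_zero_ne_zero.symm,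
        avoids_p321_inv.2 avoids_p321_exceptionalPerm,
        containsOnce_p213_inv.2 containsOnce_p213_exceptionalPerm⟩

lemma sAvoidContain_p321_p213_succ (m : ℕ) :
    sAvoidContain p321 p213 (m + 3) =
      sAvoidContain p321 p213 (m + 2) +
        ({exceptionalPerm m, (exceptionalPerm m)⁻¹} : Set (Perm (Fin (m + 3)))).ncard := by
  rw [sAvoidContain_succ (by decide) (by decide), setOf_apply_zero_ne_zero_eq]

lemma sAvoidContain_p321_p213_add_three (m : ℕ) :
    sAvoidContain p321 p213 (m + 3) = 2 * m + 1 := by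
  induction m with
  | zero =>
    have hinv : exceptionalPerm 0 = (exceptionalPerm 0)⁻¹ := exceptionalPerm_eq_inv_iff.2 rfl
    rw [sAvoidContain_p321_p213_succ, sAvoidContain_eq_zero_of_lt _ _ (Nat.lt_succ_self _),
      ← hinv, Set.pair_eq_singleton, Set.ncard_singleton]
  | succ m ih =>
    have hne : exceptionalPerm (m + 1) ≠ (exceptionalPerm (m + 1))⁻¹ :=
      exceptionalPerm_eq_inv_iff.not.2 m.succ_ne_zero
    rw [sAvoidContain_p321_p213_succ, ih, Set.ncard_pair hne]
    ring

/-- Theorem 4.2: for each listed pair `(α,β)`, `s_n(α;β) = 2n−5` for `n ≥ 3`. -/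
theorem sAvoidContain_eq_of_mem_classC :
    ∀ p ∈ [(p123, p231), (p123, p312), (p321, p132), (p321, p213)],
      ∀ n : ℕ, 3 ≤ n → sAvoidContain p.1 p.2 n = 2 * n - 5 := by
  have h321_213 (n) (hn : 3 ≤ n) : sAvoidContain p321 p213 n = 2 * n - 5 := by
    obtain ⟨m, rfl⟩ := Nat.exists_eq_add_of_le' hn
    rw [sAvoidContain_p321_p213_add_three]
    omega
  have h123_312 (n) : sAvoidContain p123 p312 n = sAvoidContain p321 p213 n := by
    have hα : p321 * Fin.revPerm = p123 := by decide
    have hβ : p213 * Fin.revPerm = p312 := by decide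
    rw [← hα, ← hβ, sAvoidContain_reverse]
  have h123_231 (n) : sAvoidContain p123 p231 n = sAvoidContain p123 p312 n := by
    have hα : p123⁻¹ = p123 := by decide
    have hβ : p312⁻¹ = p231 := by decide
    rw [← sAvoidContain_inv p123 p312, hα, hβ]
  have h321_132 (n) : sAvoidContain p321 p132 n = sAvoidContain p123 p231 n := by
    have hα : p123 * Fin.revPerm = p321 := by decide
    have hβ : p231 * Fin.revPerm = p132 := by decide
    rw [← hα, ← hβ, sAvoidContain_reverse]
  simp +contextual only [List.forall_mem_cons, List.not_mem_nil, IsEmpty.forall_iff,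
    h321_132, h123_231, h123_312, h321_213, implies_true, and_self]
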